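/- Let A, C ∈ ℝ^{n×n}, B, D ∈ ℝ^{n×m}, P, Π, Q ∈ S^n, S ∈ ℝ^{n×m}, and let R ∈ S^m be invertible. Let E : Θ → ℝ^{n×n} and F : Θ → ℝ^{n×m} be measurable with ∫|E(θ)|²ν(dθ) < ∞ and ∫|F(θ)|²ν(dθ) < ∞. Assume Σ := R + DᵀP D + ∫F(θ)ᵀP F(θ)ν(dθ) is invertible. Define A₁ := A − B R⁻¹Sᵀ, C₁ := C − D R⁻¹Sᵀ, E₁(θ) := E(θ) − F(θ)R⁻¹Sᵀ, Q₁ := Q − S R⁻¹Sᵀ. Then Π A + AᵀΠ + CᵀP C + ∫EᵀP E dν + Q − (S + Π B + CᵀP D + ∫EᵀP F dν) Σ⁻¹ (Sᵀ + BᵀΠ + DᵀP C + ∫FᵀP E dν) = Π A₁ + A₁ᵀΠ + C₁ᵀP C₁ + ∫E₁ᵀP E₁ dν + Q₁ − (Π B + C₁ᵀP D + ∫E₁ᵀP F dν) Σ⁻¹ (BᵀΠ + DᵀP C₁ + ∫FᵀP E₁ dν). (Part 2 of Lemma 3.3, applied with the combined coefficients A+Ā, B+B̄, etc.: the Riccati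 equations (3.3) for Problem MF and (3.9) for Problem NC are the same.) -/

import Mathlib

open Matrix MeasureTheory

noncomputable section

/-- Entrywise (Bochner) integral of a matrix-valued function. -/
def matInt {Θ : Type*} [MeasurableSpace Θ] (ν : Measure Θ) {p q : ℕ}
    (M : Θ → Matrix (Fin p) (Fin q) ℝ) : Matrix (Fin p) (Fin q) ℝ :=
  Matrix.of fun i j => ∫ θ, M θ i j ∂ν

/-! The Riccati generator is the Schur complement `X - L * Σ⁻¹ * L'` of the block matrix
`[[X, L], [L', Σ]]` obtained by adding the cost weights to the contributions of drift, diffusion and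
jumps. The feedback `u = v - K x` acts on this block matrix by congruence with the unipotent matrix
`[[1, 0], [-K, 1]]`, which leaves the Schur complement unchanged. For `K = R⁻¹ * Sᵀ` the
transformed cross weight `S - Kᵀ * R` vanishes. -/

section SquareIntegrable

variable {Θ ι κ l o 𝕜 : Type*} [MeasurableSpace Θ] {ν : Measure Θ}

lemma memLp_two_of_integrable_sum_norm_sq {V : Type*} [NormedAddCommGroup V] [Fintype ι]
    {f : ι → Θ → V} (hf : ∀ i, AEStronglyMeasurable (f i) ν)
    (h : Integrable (fun θ => ∑ i, ‖f i θ‖ ^ 2) ν) (i : ι) : MemLp (f i) 2 ν := by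
  rw [memLp_two_iff_integrable_sq_norm (hf i)]
  refine h.mono' ((hf i).norm.pow 2) (.of_forall fun θ => ?_)
  rw [Real.norm_of_nonneg (sq_nonneg _)]
  exact Finset.single_le_sum (f := fun i => ‖f i θ‖ ^ 2) (fun _ _ => sq_nonneg _)
    (Finset.mem_univ i)

lemma memLp_two_entry_of_integrable_sum_sq [Fintype ι] [Fintype κ] {M : Θ → Matrix ι κ ℝ}
    (hM : ∀ i j, AEStronglyMeasurable (fun θ => M θ i j) ν)
    (h : Integrable (fun θ => ∑ i, ∑ j, (M θ i j) ^ 2) ν) (i : ι) (j : κ) :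
    MemLp (fun θ => M θ i j) 2 ν :=
  memLp_two_of_integrable_sum_norm_sq (f := fun (ij : ι × κ) θ => M θ ij.1 ij.2)
    (fun ij => hM ij.1 ij.2)
    (by simpa only [Fintype.sum_prod_type, Real.norm_eq_abs, sq_abs] using h) (i, j)

variable [NormedRing 𝕜] [Fintype κ]

lemma memLp_entry_mul_const {p : ENNReal} {M : Θ → Matrix ι κ 𝕜}
    (hM : ∀ i j, MemLp (fun θ => M θ i j) p ν) (K : Matrix κ l 𝕜) (i : ι) (j : l) :
    MemLp (fun θ => (M θ * K) i j) p ν := by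
  simp only [mul_apply]
  exact memLp_finsetSum _ fun k _ => (hM i k).mul_const (K k j)

lemma integrable_entry_transpose_mul_mul [Fintype o] {M : Θ → Matrix κ ι 𝕜} {N : Θ → Matrix o l 𝕜}
    (P : Matrix κ o 𝕜) (hM : ∀ i j, MemLp (fun θ => M θ i j) 2 ν)
    (hN : ∀ i j, MemLp (fun θ => N θ i j) 2 ν) (i : ι) (j : l) :
    Integrable (fun θ => ((M θ)ᵀ * P * N θ) i j) ν := by
  have hMP := memLp_entry_mul_const (M := fun θ => (M θ)ᵀ) (fun i k => hM k i) P
  have entry_eq (θ : Θ) : ((M θ)ᵀ * P * N θ) i j = ∑ k, ((M θ)ᵀ * P) i k * N θ k j := mul_apply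
  simp only [entry_eq]
  exact integrable_finsetSum _ fun k _ => (hMP i k).integrable_mul (hN k j)

end SquareIntegrable

section MatInt

variable {Θ : Type*} [MeasurableSpace Θ] {ν : Measure Θ} {o p q r s : ℕ}

lemma matInt_transpose (M : Θ → Matrix (Fin p) (Fin q) ℝ) :
    matInt ν (fun θ => (M θ)ᵀ) = (matInt ν M)ᵀ :=
  rfl

lemma matInt_sub {M N : Θ → Matrix (Fin p) (Fin q) ℝ}
    (hM : ∀ i j, Integrable (fun θ => M θ i j) ν) (hN : ∀ i j, Integrable (fun θ => N θ i j) ν) :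
    matInt ν (fun θ => M θ - N θ) = matInt ν M - matInt ν N := by
  ext i j
  exact integral_sub (hM i j) (hN i j)

lemma matInt_mul_const {M : Θ → Matrix (Fin p) (Fin q) ℝ}
    (hM : ∀ i j, Integrable (fun θ => M θ i j) ν) (K : Matrix (Fin q) (Fin r) ℝ) :
    matInt ν (fun θ => M θ * K) = matInt ν M * K := by
  ext i j
  simp only [matInt, of_apply, mul_apply]
  rw [integral_finsetSum _ fun k _ => (hM i k).mul_const _]
  simp only [integral_mul_const]

variable {M : Θ → Matrix (Fin p) (Fin q) ℝ}

lemma matInt_transpose_mul_mul_sub_mul {N : Θ → Matrix (Fin o) (Fin r) ℝ}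
    {H : Θ → Matrix (Fin o) (Fin s) ℝ} (P : Matrix (Fin p) (Fin o) ℝ)
    (hM : ∀ i j, MemLp (fun θ => M θ i j) 2 ν) (hN : ∀ i j, MemLp (fun θ => N θ i j) 2 ν)
    (hH : ∀ i j, MemLp (fun θ => H θ i j) 2 ν) (K : Matrix (Fin s) (Fin r) ℝ) :
    matInt ν (fun θ => (M θ)ᵀ * P * (N θ - H θ * K)) =
      matInt ν (fun θ => (M θ)ᵀ * P * N θ) - matInt ν (fun θ => (M θ)ᵀ * P * H θ) * K := by
  rw [← matInt_mul_const (integrable_entry_transpose_mul_mul P hM hH),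
    ← matInt_sub (integrable_entry_transpose_mul_mul P hM hN)]
  · simp only [Matrix.mul_sub, Matrix.mul_assoc]
  · simpa only [Matrix.mul_assoc] using
      integrable_entry_transpose_mul_mul P hM (memLp_entry_mul_const hH K)

lemma matInt_transpose_sub_mul_mul_mul {N : Θ → Matrix (Fin o) (Fin r) ℝ}
    {H : Θ → Matrix (Fin p) (Fin s) ℝ} (P : Matrix (Fin p) (Fin o) ℝ)
    (hM : ∀ i j, MemLp (fun θ => M θ i j) 2 ν) (hN : ∀ i j, MemLp (fun θ => N θ i j) 2 ν)
    (hH : ∀ i j, MemLp (fun θ => H θ i j) 2 ν) (K : Matrix (Fin s) (Fin q) ℝ) :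
    matInt ν (fun θ => (M θ - H θ * K)ᵀ * P * N θ) =
      matInt ν (fun θ => (M θ)ᵀ * P * N θ) - Kᵀ * matInt ν (fun θ => (H θ)ᵀ * P * N θ) := by
  apply transpose_injective
  simpa only [transpose_sub, transpose_mul, transpose_transpose, ← matInt_transpose,
    Matrix.mul_assoc] using matInt_transpose_mul_mul_sub_mul Pᵀ hN hM hH K

end MatInt

lemma schur_complement_unipotent_congr {k l o 𝕜 : Type*} [Fintype o] [DecidableEq o] [CommRing 𝕜]
    (X : Matrix k l 𝕜) (L : Matrix k o 𝕜) (L' : Matrix o l 𝕜) {W : Matrix o o 𝕜}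
    (hW : IsUnit W.det) (J : Matrix k o 𝕜) (K : Matrix o l 𝕜) :
    X - L * K - J * L' + J * W * K - (L - J * W) * W⁻¹ * (L' - W * K) = X - L * W⁻¹ * L' := by
  have cancel_left : (L - J * W) * W⁻¹ = L * W⁻¹ - J := by
    rw [Matrix.sub_mul, mul_nonsing_inv_cancel_right _ _ hW]
  have cancel_right : L * W⁻¹ * (W * K) = L * K := by
    rw [Matrix.mul_assoc, nonsing_inv_mul_cancel_left _ _ hW]
  rw [cancel_left, Matrix.sub_mul, Matrix.mul_sub, Matrix.mul_sub, cancel_right, Matrix.mul_assoc J]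
  abel

/-- Coefficients of a linear-quadratic control problem with state `x` in `ℝⁿ` and control `u` in
`ℝᵐ`: drift `A x + B u`, diffusion `C x + D u`, jumps `E θ x + F θ u` of mark `θ`, and running cost
with weights `Q` on the state, `R` on the control, and `S` between the two. -/
structure LQCoeffs (n m : ℕ) (Θ : Type*) where
  A : Matrix (Fin n) (Fin n) ℝ
  B : Matrix (Fin n) (Fin m) ℝ
  C : Matrix (Fin n) (Fin n) ℝ
  D : Matrix (Fin n) (Fin m) ℝ
  E : Θ → Matrix (Fin n) (Fin n) ℝ
  F : Θ → Matrix (Fin n) (Fin m) ℝ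
  Q : Matrix (Fin n) (Fin n) ℝ
  S : Matrix (Fin n) (Fin m) ℝ
  R : Matrix (Fin m) (Fin m) ℝ

namespace LQCoeffs

variable {n m : ℕ} {Θ : Type*}

/-- The coefficients of the problem in the new control `v` after the substitution `u = v - K x`. -/
def feedback (c : LQCoeffs n m Θ) (K : Matrix (Fin m) (Fin n) ℝ) : LQCoeffs n m Θ where
  A := c.A - c.B * K
  B := c.B
  C := c.C - c.D * K
  D := c.D
  E θ := c.E θ - c.F θ * K
  F := c.F
  Q := c.Q - c.S * K - Kᵀ * c.Sᵀ + Kᵀ * c.R * K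
  S := c.S - Kᵀ * c.R
  R := c.R

lemma feedback_eq_of_mul_eq_transpose {c : LQCoeffs n m Θ} (hR : c.R.IsSymm)
    {K : Matrix (Fin m) (Fin n) ℝ} (hK : c.R * K = c.Sᵀ) :
    c.feedback K = { c.feedback K with Q := c.Q - c.S * K, S := 0 } := by
  have hKR : Kᵀ * c.R = c.S := by
    simpa only [transpose_mul, hR.eq, transpose_transpose] using congrArg transpose hK
  have hKS : Kᵀ * c.Sᵀ = c.S * K := by rw [← hK, ← Matrix.mul_assoc, hKR]
  simp only [feedback, hKR, hKS, sub_add_cancel, sub_self]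

variable [MeasurableSpace Θ]

section Blocks

variable (c : LQCoeffs n m Θ) (ν : Measure Θ) (P Pim : Matrix (Fin n) (Fin n) ℝ)

/-- The state–state block `X`. Throughout, `P` weights the diffusion and jump terms, and `Pim` (the
paper's `Π`) weights the drift. -/
def stateBlock : Matrix (Fin n) (Fin n) ℝ :=
  Pim * c.A + c.Aᵀ * Pim + c.Cᵀ * P * c.C + matInt ν (fun θ => (c.E θ)ᵀ * P * c.E θ) + c.Q

/-- The state–control block `L`. -/
def stateControlBlock : Matrix (Fin n) (Fin m) ℝ :=
  c.S + Pim * c.B + c.Cᵀ * P * c.D + matInt ν (fun θ => (c.E θ)ᵀ * P * c.F θ)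

/-- The control–state block `L'`; it is the transpose of `stateControlBlock` when `P` and `Pim` are
symmetric. -/
def controlStateBlock : Matrix (Fin m) (Fin n) ℝ :=
  c.Sᵀ + c.Bᵀ * Pim + c.Dᵀ * P * c.C + matInt ν (fun θ => (c.F θ)ᵀ * P * c.E θ)

/-- The control–control block `Σ`. -/
def controlBlock : Matrix (Fin m) (Fin m) ℝ :=
  c.R + c.Dᵀ * P * c.D + matInt ν (fun θ => (c.F θ)ᵀ * P * c.F θ)

/-- The right-hand side of the Riccati equation for `Pim`, as the Schur complement
`X - L * Σ⁻¹ * L'`. -/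
def riccatiGenerator : Matrix (Fin n) (Fin n) ℝ :=
  c.stateBlock ν P Pim -
    c.stateControlBlock ν P Pim * (c.controlBlock ν P)⁻¹ * c.controlStateBlock ν P Pim

end Blocks

variable {c : LQCoeffs n m Θ} {ν : Measure Θ}

lemma stateControlBlock_feedback (hE : ∀ i j, MemLp (fun θ => c.E θ i j) 2 ν)
    (hF : ∀ i j, MemLp (fun θ => c.F θ i j) 2 ν) (P Pim : Matrix (Fin n) (Fin n) ℝ)
    (K : Matrix (Fin m) (Fin n) ℝ) :
    (c.feedback K).stateControlBlock ν P Pim =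
      c.stateControlBlock ν P Pim - Kᵀ * c.controlBlock ν P := by
  simp only [stateControlBlock, controlBlock, feedback]
  rw [matInt_transpose_sub_mul_mul_mul P hE hF hF]
  simp only [transpose_sub, transpose_mul, Matrix.sub_mul, Matrix.mul_add, Matrix.mul_assoc]
  abel

lemma controlStateBlock_feedback (hR : c.R.IsSymm) (hE : ∀ i j, MemLp (fun θ => c.E θ i j) 2 ν)
    (hF : ∀ i j, MemLp (fun θ => c.F θ i j) 2 ν) (P Pim : Matrix (Fin n) (Fin n) ℝ)
    (K : Matrix (Fin m) (Fin n) ℝ) :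
    (c.feedback K).controlStateBlock ν P Pim =
      c.controlStateBlock ν P Pim - c.controlBlock ν P * K := by
  simp only [controlStateBlock, controlBlock, feedback]
  rw [matInt_transpose_mul_mul_sub_mul P hF hE hF]
  simp only [transpose_sub, transpose_mul, transpose_transpose, hR.eq, Matrix.mul_sub,
    Matrix.add_mul, Matrix.mul_assoc]
  abel

lemma stateBlock_feedback (hE : ∀ i j, MemLp (fun θ => c.E θ i j) 2 ν)
    (hF : ∀ i j, MemLp (fun θ => c.F θ i j) 2 ν) (P Pim : Matrix (Fin n) (Fin n) ℝ)
    (K : Matrix (Fin m) (Fin n) ℝ) :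
    (c.feedback K).stateBlock ν P Pim =
      c.stateBlock ν P Pim - c.stateControlBlock ν P Pim * K - Kᵀ * c.controlStateBlock ν P Pim +
        Kᵀ * c.controlBlock ν P * K := by
  have hEK : ∀ i j, MemLp (fun θ => (c.E θ - c.F θ * K) i j) 2 ν := fun i j =>
    (hE i j).sub (memLp_entry_mul_const hF K i j)
  simp only [stateBlock, stateControlBlock, controlStateBlock, controlBlock, feedback]
  rw [matInt_transpose_sub_mul_mul_mul P hE hEK hF, matInt_transpose_mul_mul_sub_mul P hE hE hF,
    matInt_transpose_mul_mul_sub_mul P hF hE hF]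
  simp only [transpose_sub, transpose_mul, Matrix.sub_mul, Matrix.mul_sub, Matrix.add_mul,
    Matrix.mul_add, Matrix.mul_assoc]
  abel

theorem riccatiGenerator_feedback (hR : c.R.IsSymm) (hE : ∀ i j, MemLp (fun θ => c.E θ i j) 2 ν)
    (hF : ∀ i j, MemLp (fun θ => c.F θ i j) 2 ν) {P : Matrix (Fin n) (Fin n) ℝ}
    (hW : IsUnit (c.controlBlock ν P).det) (Pim : Matrix (Fin n) (Fin n) ℝ)
    (K : Matrix (Fin m) (Fin n) ℝ) :
    (c.feedback K).riccatiGenerator ν P Pim = c.riccatiGenerator ν P Pim := by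
  have controlBlock_feedback : (c.feedback K).controlBlock ν P = c.controlBlock ν P := rfl
  rw [riccatiGenerator, riccatiGenerator, stateBlock_feedback hE hF,
    stateControlBlock_feedback hE hF, controlStateBlock_feedback hR hE hF, controlBlock_feedback,
    schur_complement_unipotent_congr _ _ _ hW]

end LQCoeffs

theorem riccati_generators_eq_mean_part_general {n m : ℕ} {Θ : Type*} [MeasurableSpace Θ]
    {ν : Measure Θ} {c : LQCoeffs n m Θ} (hR : c.R.IsSymm)
    (hE : ∀ i j, MemLp (fun θ => c.E θ i j) 2 ν) (hF : ∀ i j, MemLp (fun θ => c.F θ i j) 2 ν)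
    {P : Matrix (Fin n) (Fin n) ℝ} (hW : IsUnit (c.controlBlock ν P).det)
    (Pim : Matrix (Fin n) (Fin n) ℝ) {K : Matrix (Fin m) (Fin n) ℝ} (hK : c.R * K = c.Sᵀ) :
    c.riccatiGenerator ν P Pim =
      { c.feedback K with Q := c.Q - c.S * K, S := 0 : LQCoeffs n m Θ }.riccatiGenerator
        ν P Pim := by
  rw [← LQCoeffs.feedback_eq_of_mul_eq_transpose hR hK,
    LQCoeffs.riccatiGenerator_feedback hR hE hF hW]

/-- Part 2 of Lemma 3.3 (with the combined coefficients): the Riccati equation (3.3)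
for Problem MF and the Riccati equation (3.9) for Problem NC have the same
right-hand side. -/
theorem riccati_generators_eq_mean_part
    {n m : ℕ} (hn : 0 < n) (hm : 0 < m)
    {Θ : Type*} [MeasurableSpace Θ] (ν : Measure Θ)
    (A C : Matrix (Fin n) (Fin n) ℝ) (B D : Matrix (Fin n) (Fin m) ℝ)
    (P Pim Q : Matrix (Fin n) (Fin n) ℝ)
    (hP : P.IsSymm) (hPim : Pim.IsSymm) (hQ : Q.IsSymm)
    (S : Matrix (Fin n) (Fin m) ℝ)
    (R : Matrix (Fin m) (Fin m) ℝ) (hR : R.IsSymm) (hRinv : IsUnit R.det)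
    (E : Θ → Matrix (Fin n) (Fin n) ℝ) (F : Θ → Matrix (Fin n) (Fin m) ℝ)
    (hEmeas : ∀ i j, Measurable fun θ => E θ i j)
    (hFmeas : ∀ i j, Measurable fun θ => F θ i j)
    (hE2 : Integrable (fun θ => ∑ i, ∑ j, (E θ i j) ^ 2) ν)
    (hF2 : Integrable (fun θ => ∑ i, ∑ j, (F θ i j) ^ 2) ν)
    (Sg : Matrix (Fin m) (Fin m) ℝ)
    (hSg : Sg = R + Dᵀ * P * D + matInt ν (fun θ => (F θ)ᵀ * P * F θ))
    (hSginv : IsUnit Sg.det)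
    (A₁ C₁ : Matrix (Fin n) (Fin n) ℝ) (hA₁ : A₁ = A - B * R⁻¹ * Sᵀ)
    (hC₁ : C₁ = C - D * R⁻¹ * Sᵀ)
    (E₁ : Θ → Matrix (Fin n) (Fin n) ℝ)
    (hE₁ : ∀ θ, E₁ θ = E θ - F θ * R⁻¹ * Sᵀ)
    (Q₁ : Matrix (Fin n) (Fin n) ℝ) (hQ₁ : Q₁ = Q - S * R⁻¹ * Sᵀ) :
    Pim * A + Aᵀ * Pim + Cᵀ * P * C + matInt ν (fun θ => (E θ)ᵀ * P * E θ) + Q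
      - (S + Pim * B + Cᵀ * P * D + matInt ν (fun θ => (E θ)ᵀ * P * F θ)) * Sg⁻¹
        * (Sᵀ + Bᵀ * Pim + Dᵀ * P * C + matInt ν (fun θ => (F θ)ᵀ * P * E θ))
      = Pim * A₁ + A₁ᵀ * Pim + C₁ᵀ * P * C₁ + matInt ν (fun θ => (E₁ θ)ᵀ * P * E₁ θ) + Q₁
        - (Pim * B + C₁ᵀ * P * D + matInt ν (fun θ => (E₁ θ)ᵀ * P * F θ)) * Sg⁻¹
          * (Bᵀ * Pim + Dᵀ * P * C₁ + matInt ν (fun θ => (F θ)ᵀ * P * E₁ θ)) := by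
  obtain rfl : E₁ = fun θ => E θ - F θ * R⁻¹ * Sᵀ := funext hE₁
  subst hSg hA₁ hC₁ hQ₁
  have hE := memLp_two_entry_of_integrable_sum_sq
    (fun i j => (hEmeas i j).aestronglyMeasurable) hE2
  have hF := memLp_two_entry_of_integrable_sum_sq
    (fun i j => (hFmeas i j).aestronglyMeasurable) hF2
  simpa only [LQCoeffs.riccatiGenerator, LQCoeffs.stateBlock, LQCoeffs.stateControlBlock,
    LQCoeffs.controlStateBlock, LQCoeffs.controlBlock, LQCoeffs.feedback, Matrix.mul_assoc,
    transpose_zero, zero_add] using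
    riccati_generators_eq_mean_part_general (c := ⟨A, B, C, D, E, F, Q, S, R⟩) hR hE hF hSginv Pim
      (mul_nonsing_inv_cancel_left _ _ hRinv)
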